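/- Fix half-bandwidths W⁰, W¹ ∈ (0, 1/2), let 𝕎 = [−W⁰, W⁰] × [−W¹, W¹], and fix ε ∈ (0, 1). Then there exist constants C̄₁ > 0, C̄₂ > 0 and integers M̄₁, N̄₁ ≥ 1 (depending only on W⁰, W¹ and ε) such that for all M ≥ M̄₁, N ≥ N̄₁ and every index p with 0 ≤ p ≤ ⌊4MN·W⁰·W¹·(1−ε)⌋, the p-th eigenvalue satisfies 1 − λ_{(M,N),𝕎}^{(p)} ≤ C̄₁·e^{−C̄₂·min(M,N)}. -/

import Mathlib

open MeasureTheory Matrix Real Set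

/-- The 2-D prolate matrix `B_{(M,N),𝕎}`, indexed by pairs, with entries
`∫_𝕎 exp(2πi (f (m−p) + g (n−q))) df dg`. -/
noncomputable def prolate2D (M N : ℕ) (𝕎 : Set (ℝ × ℝ)) :
    Matrix (Fin M × Fin N) (Fin M × Fin N) ℂ :=
  fun i j => ∫ fg in 𝕎,
    Complex.exp (2 * (Real.pi : ℂ) * Complex.I *
      ((fg.1 : ℂ) * (((i.1 : ℕ) : ℂ) - ((j.1 : ℕ) : ℂ)) +
       (fg.2 : ℂ) * (((i.2 : ℕ) : ℂ) - ((j.2 : ℕ) : ℂ))))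

/-! On a rectangle the prolate matrix is the Kronecker product of two one-dimensional ones, so its
eigenvalues are the products of theirs, and it suffices that a one-dimensional prolate matrix of
size `N` and half-bandwidth `W` has more than `2 N W (1 - δ)` eigenvalues exponentially close
to `1`.

Its quadratic form at `x` is the energy in the band of the discrete-time Fourier transform of `x`,
and by Parseval the full period carries the energy `‖x‖ ^ 2`. By Courant–Fischer it is enough to
find a space of large dimension whose signals have exponentially little energy out of band. Take
the Dirichlet kernel of length `L`, slightly less than `N`, times `((1 + z) / 2) ^ (N - L)`, which
is exponentially small away from `z = 1`. Translating this product to the points of the grid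
`(1 / L) ℤ` which lie well inside the band gives about `2 L W` signals. The translates interpolate
at the grid, so the coefficients of a combination `x` are values of its transform, at most
`√N * ‖x‖`. -/

open scoped Kronecker FourierTransform InnerProductSpace Polynomial

section EigenvalueCount

open Module RCLike

variable {𝕜 m n : Type*} [RCLike 𝕜] [Fintype m] [DecidableEq m] [Fintype n] [DecidableEq n]

/-- The number of eigenvalues of `A` in `[t, ∞)`, counted with algebraic multiplicity; intended
for Hermitian `A`. Counting roots of the characteristic polynomial, rather than values of
`Matrix.IsHermitian.eigenvalues`, keeps the definition free of a proof that `A` is Hermitian. -/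
noncomputable def eigenvalueCount (A : Matrix n n 𝕜) (t : ℝ) : ℕ :=
  A.charpoly.roots.countP fun z => t ≤ re z

lemma eigenvalueCount_eq_card_eigenvalues {A : Matrix n n 𝕜} (hA : A.IsHermitian) (t : ℝ) :
    eigenvalueCount A t = Finset.card {i | t ≤ hA.eigenvalues i} := by
  simp only [eigenvalueCount, hA.roots_charpoly_eq_eigenvalues, Multiset.countP_map,
    Function.comp_apply, ofReal_re]
  rfl

lemma eigenvalueCount_antitone (A : Matrix n n 𝕜) : Antitone (eigenvalueCount A) := by
  intro s t hst
  simp only [eigenvalueCount, Multiset.countP_eq_card_filter]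
  exact Multiset.card_le_card (Multiset.monotone_filter_right _ fun z hz => hst.trans hz)

lemma re_inner_toEuclideanLin_eq_sum_eigenvalues {A : Matrix n n 𝕜} (hA : A.IsHermitian)
    (x : EuclideanSpace 𝕜 n) :
    re ⟪x, A.toEuclideanLin x⟫_𝕜 =
      ∑ i, hA.eigenvalues i * ‖⟪hA.eigenvectorBasis i, x⟫_𝕜‖ ^ 2 := by
  have hcoord : ∀ i, ⟪hA.eigenvectorBasis i, A.toEuclideanLin x⟫_𝕜 =
      hA.eigenvalues i * ⟪hA.eigenvectorBasis i, x⟫_𝕜 := fun i => by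
    have heigen : A.toEuclideanLin (hA.eigenvectorBasis i) =
        (hA.eigenvalues i : 𝕜) • hA.eigenvectorBasis i := by
      rw [Matrix.toLpLin_apply, hA.mulVec_eigenvectorBasis]
      ext j
      simp [real_smul_eq_coe_mul]
    rw [← Matrix.isSymmetric_toEuclideanLin_iff.2 hA, heigen, inner_smul_left, conj_ofReal]
  rw [← hA.eigenvectorBasis.sum_inner_mul_inner, map_sum]
  refine Finset.sum_congr rfl fun i _ => ?_
  rw [hcoord, mul_left_comm, re_ofReal_mul, ← inner_conj_symm x, RCLike.conj_mul, ← ofReal_pow,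
    ofReal_re]

/-- One half of the Courant–Fischer principle. -/
theorem finrank_le_eigenvalueCount {A : Matrix n n 𝕜} (hA : A.IsHermitian) {t : ℝ}
    (V : Submodule 𝕜 (EuclideanSpace 𝕜 n))
    (hV : ∀ x ∈ V, t * ‖x‖ ^ 2 ≤ re ⟪x, A.toEuclideanLin x⟫_𝕜) :
    finrank 𝕜 V ≤ eigenvalueCount A t := by
  set b := hA.eigenvectorBasis
  let topCoords : V →ₗ[𝕜] ({i // t ≤ hA.eigenvalues i} → 𝕜) :=
    LinearMap.pi fun i => (innerₛₗ 𝕜 (b i)).domRestrict V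
  have hinj : Function.Injective topCoords := by
    refine (injective_iff_map_eq_zero _).2 fun x hx => ?_
    have htop : ∀ i, t ≤ hA.eigenvalues i → ⟪b i, (x : EuclideanSpace 𝕜 n)⟫_𝕜 = 0 :=
      fun i hi => congrFun hx ⟨i, hi⟩
    have hterm : ∀ i, 0 ≤ (t - hA.eigenvalues i) * ‖⟪b i, (x : EuclideanSpace 𝕜 n)⟫_𝕜‖ ^ 2 := by
      intro i
      rcases le_or_gt t (hA.eigenvalues i) with hi | hi
      · simp [htop i hi]
      · exact mul_nonneg (sub_nonneg.2 hi.le) (sq_nonneg _)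
    have hsum : ∑ i, (t - hA.eigenvalues i) * ‖⟪b i, (x : EuclideanSpace 𝕜 n)⟫_𝕜‖ ^ 2 ≤ 0 := by
      have := hV x x.2
      rw [re_inner_toEuclideanLin_eq_sum_eigenvalues hA, ← b.sum_sq_norm_inner_right,
        Finset.mul_sum] at this
      simpa only [sub_mul, Finset.sum_sub_distrib, sub_nonpos] using this
    have hzero := (Finset.sum_eq_zero_iff_of_nonneg fun i _ => hterm i).1
      (hsum.antisymm (Finset.sum_nonneg fun i _ => hterm i))
    have hcoord : ∀ i, ⟪b i, (x : EuclideanSpace 𝕜 n)⟫_𝕜 = 0 := fun i => by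
      rcases le_or_gt t (hA.eigenvalues i) with hi | hi
      · exact htop i hi
      · simpa [sub_eq_zero, hi.ne'] using hzero i (Finset.mem_univ i)
    refine Subtype.ext (b.repr.map_eq_zero_iff.1 (PiLp.ext fun i => ?_))
    rw [b.repr_apply_apply, hcoord, PiLp.zero_apply]
  calc finrank 𝕜 V ≤ finrank 𝕜 ({i // t ≤ hA.eigenvalues i} → 𝕜) :=
        LinearMap.finrank_le_finrank_of_injective hinj
    _ = eigenvalueCount A t := by
        rw [finrank_fintype_fun_eq_card, Fintype.card_subtype,
          eigenvalueCount_eq_card_eigenvalues hA]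

lemma roots_charpoly_kronecker {A : Matrix m m 𝕜} {B : Matrix n n 𝕜} (hA : A.IsHermitian)
    (hB : B.IsHermitian) :
    (A ⊗ₖ B).charpoly.roots = (Finset.univ : Finset (m × n)).val.map
      fun i => ((hA.eigenvalues i.1 * hB.eigenvalues i.2 : ℝ) : 𝕜) := by
  have hcharpoly : (A ⊗ₖ B).charpoly = ∏ i : m × n,
      (Polynomial.X - Polynomial.C ((hA.eigenvalues i.1 * hB.eigenvalues i.2 : ℝ) : 𝕜)) := by
    conv_lhs =>
      rw [hA.spectral_theorem, hB.spectral_theorem, Unitary.conjStarAlgAut_apply,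
        Unitary.conjStarAlgAut_apply, mul_kronecker_mul, mul_kronecker_mul, charpoly_mul_comm,
        ← mul_assoc, ← mul_kronecker_mul, Unitary.coe_star_mul_self, Unitary.coe_star_mul_self,
        one_kronecker_one, one_mul, diagonal_kronecker_diagonal, charpoly_diagonal]
    simp only [Function.comp_apply, ofReal_mul]
  rw [hcharpoly, Polynomial.roots_prod _ _
    (Finset.prod_ne_zero_iff.2 fun _ _ => Polynomial.X_sub_C_ne_zero _)]
  simp only [Polynomial.roots_X_sub_C, Multiset.bind_singleton]

lemma eigenvalueCount_mul_le_eigenvalueCount_kronecker {A : Matrix m m 𝕜} {B : Matrix n n 𝕜}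
    (hA : A.IsHermitian) (hB : B.IsHermitian) {s t : ℝ} (hs : 0 ≤ s) (ht : 0 ≤ t) :
    eigenvalueCount A s * eigenvalueCount B t ≤ eigenvalueCount (A ⊗ₖ B) (s * t) := by
  have hcount : eigenvalueCount (A ⊗ₖ B) (s * t) =
      Finset.card {i : m × n | s * t ≤ hA.eigenvalues i.1 * hB.eigenvalues i.2} := by
    simp only [eigenvalueCount, roots_charpoly_kronecker hA hB, Multiset.countP_map, ofReal_re]
    rfl
  rw [hcount, eigenvalueCount_eq_card_eigenvalues hA, eigenvalueCount_eq_card_eigenvalues hB,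
    ← Finset.card_product]
  refine Finset.card_le_card fun i hi => ?_
  simp only [Finset.mem_product, Finset.mem_filter_univ] at hi ⊢
  exact mul_le_mul hi.1 hi.2 ht (hs.trans hi.1)

lemma le_apply_of_lt_card_filter_le {α : Type*} [LinearOrder α] {K : ℕ} {μ : Fin K → α}
    (hμ : Antitone μ) {p : Fin K} {t : α} (hp : (p : ℕ) < Finset.card {q | t ≤ μ q}) :
    t ≤ μ p := by
  contrapose! hp
  calc Finset.card {q | t ≤ μ q} ≤ (Finset.Iio p).card := Finset.card_le_card fun q hq =>
        Finset.mem_Iio.2 <| hμ.reflect_lt <| hp.trans_le <| (Finset.mem_filter_univ q).1 hq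
    _ = p := Fin.card_Iio p

lemma le_apply_of_lt_eigenvalueCount {A : Matrix n n 𝕜} (hA : A.IsHermitian) {K : ℕ}
    {μ : Fin K → ℝ} (hμ : Antitone μ) {e : n ≃ Fin K} (he : hA.eigenvalues = μ ∘ e)
    {p : Fin K} {t : ℝ} (hp : (p : ℕ) < eigenvalueCount A t) : t ≤ μ p := by
  refine le_apply_of_lt_card_filter_le hμ ?_
  rwa [eigenvalueCount_eq_card_eigenvalues hA, he,
    Finset.card_equiv e (t := {q | t ≤ μ q}) (by simp)] at hp

end EigenvalueCount

section ProlateForm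

variable {N : ℕ}

/-- The one-dimensional prolate matrix `B_{N,𝕎}`. Its entries are written with the character
`𝐞 x = exp (2πix)`. -/
noncomputable def prolate1D (N : ℕ) (𝕎 : Set ℝ) : Matrix (Fin N) (Fin N) ℂ :=
  fun i j => ∫ f in 𝕎, (𝐞 (f * ((i : ℝ) - j)) : ℂ)

lemma isHermitian_prolate1D (N : ℕ) (𝕎 : Set ℝ) : (prolate1D N 𝕎).IsHermitian := by
  ext i j
  rw [conjTranspose_apply, prolate1D, prolate1D, RCLike.star_def, ← integral_conj]
  refine integral_congr_ae (.of_forall fun f => ?_)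
  simp only [← Circle.coe_inv_eq_conj, ← AddChar.map_neg_eq_inv]
  ring_nf

lemma prolate2D_prod_eq_kronecker (M N : ℕ) (S T : Set ℝ) :
    prolate2D M N (S ×ˢ T) = prolate1D M S ⊗ₖ prolate1D N T := by
  ext i j
  rw [kroneckerMap_apply, prolate1D, prolate1D, ← setIntegral_prod_mul, ← Measure.volume_eq_prod,
    prolate2D]
  refine integral_congr_ae (.of_forall fun fg => ?_)
  simp only [fourierChar_apply, ← Complex.exp_add]
  push_cast
  ring_nf

/-- The discrete-time Fourier transform of the signal `x` supported on `{0, …, N - 1}`. -/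
noncomputable def dtft (x : EuclideanSpace ℂ (Fin N)) (f : ℝ) : ℂ :=
  ∑ p, x p * 𝐞 (-(f * p))

@[fun_prop]
lemma continuous_dtft (x : EuclideanSpace ℂ (Fin N)) : Continuous (dtft x) := by
  unfold dtft
  fun_prop

lemma norm_dtft_le (x : EuclideanSpace ℂ (Fin N)) (f : ℝ) : ‖dtft x f‖ ≤ √N * ‖x‖ := by
  have hsq : (∑ p, ‖x p‖) ^ 2 ≤ N * ‖x‖ ^ 2 := by
    simpa [EuclideanSpace.norm_sq_eq] using
      sq_sum_le_card_mul_sum_sq (s := Finset.univ) (f := fun p => ‖x p‖)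
  calc ‖dtft x f‖ ≤ ∑ p, ‖x p‖ :=
        (norm_sum_le _ _).trans_eq (by simp only [norm_mul, Circle.norm_coe, mul_one])
    _ ≤ √(N * ‖x‖ ^ 2) := le_sqrt_of_sq_le hsq
    _ = √N * ‖x‖ := by rw [sqrt_mul N.cast_nonneg, sqrt_sq (norm_nonneg x)]

lemma normSq_dtft_eq_sum (x : EuclideanSpace ℂ (Fin N)) (f : ℝ) :
    ((‖dtft x f‖ ^ 2 : ℝ) : ℂ) =
      ∑ i : Fin N, star (x i) * ∑ j : Fin N, (𝐞 (f * ((i : ℝ) - j)) : ℂ) * x j := by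
  rw [Complex.ofReal_pow, ← Complex.conj_mul', dtft, map_sum, Finset.sum_mul]
  refine Finset.sum_congr rfl fun i _ => ?_
  rw [map_mul, mul_assoc, Finset.mul_sum]
  refine congrArg _ (Finset.sum_congr rfl fun j _ => ?_)
  rw [mul_left_comm, mul_comm, ← Circle.coe_inv_eq_conj, ← AddChar.map_neg_eq_inv, neg_neg,
    ← Circle.coe_mul, ← AddChar.map_add_eq_mul, ← sub_eq_add_neg, ← mul_sub]

lemma inner_prolate1D_eq_setIntegral (x : EuclideanSpace ℂ (Fin N)) {𝕎 : Set ℝ}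
    (h𝕎 : volume 𝕎 ≠ ⊤) :
    ⟪x, (prolate1D N 𝕎).toEuclideanLin x⟫_ℂ = ((∫ f in 𝕎, ‖dtft x f‖ ^ 2 : ℝ) : ℂ) := by
  have hint : ∀ i j : Fin N, IntegrableOn (fun f => (𝐞 (f * ((i : ℝ) - j)) : ℂ)) 𝕎 := fun i j =>
    Measure.integrableOn_of_bounded (M := 1) h𝕎
      (Continuous.aestronglyMeasurable (by fun_prop)) (.of_forall fun f => (Circle.norm_coe _).le)
  rw [← integral_complex_ofReal]
  simp_rw [normSq_dtft_eq_sum]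
  rw [integral_finsetSum _ fun i _ => (integrable_finsetSum _ fun j _ =>
    (hint i j).mul_const _).const_mul _, EuclideanSpace.inner_eq_star_dotProduct, dotProduct_comm]
  refine Finset.sum_congr rfl fun i _ => ?_
  rw [integral_const_mul, integral_finsetSum _ fun j _ => (hint i j).mul_const _]
  simp_rw [integral_mul_const]
  rfl

lemma integral_fourierChar_mul_int (k : ℤ) :
    ∫ f in Icc (-(1 / 2) : ℝ) (1 / 2), (𝐞 (f * k) : ℂ) = if k = 0 then 1 else 0 := by
  rw [integral_Icc_eq_integral_Ioc, ← intervalIntegral.integral_of_le (by norm_num)]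
  split_ifs with hk
  · norm_num [hk]
  set c : ℂ := 2 * π * Complex.I * k
  have hc : c ≠ 0 := mul_ne_zero Complex.two_pi_I_ne_zero (Int.cast_ne_zero.2 hk)
  have hchar : ∀ f : ℝ, (𝐞 (f * k) : ℂ) = Complex.exp (c * f) := fun f => by
    simp only [fourierChar_apply, c]
    push_cast
    ring_nf
  have hperiod : Complex.exp (c * (1 / 2 : ℝ)) = Complex.exp (c * (-(1 / 2) : ℝ)) :=
    Complex.exp_eq_exp_iff_exists_int.2 ⟨k, by push_cast; ring⟩
  simp_rw [hchar]
  rw [integral_exp_mul_complex hc, hperiod, sub_self, zero_div]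

lemma prolate1D_Icc_neg_half_half (N : ℕ) : prolate1D N (Icc (-(1 / 2)) (1 / 2)) = 1 := by
  ext i j
  have hint := integral_fourierChar_mul_int ((i : ℤ) - j)
  push_cast at hint
  simp only [prolate1D, hint, one_apply, sub_eq_zero, Nat.cast_inj, Fin.val_inj]

lemma parseval_dtft (x : EuclideanSpace ℂ (Fin N)) :
    ∫ f in Icc (-(1 / 2) : ℝ) (1 / 2), ‖dtft x f‖ ^ 2 = ‖x‖ ^ 2 := by
  have hform := inner_prolate1D_eq_setIntegral x (𝕎 := Icc (-(1 / 2)) (1 / 2)) (by simp)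
  rw [prolate1D_Icc_neg_half_half, toLpLin_one, LinearMap.id_apply,
    inner_self_eq_norm_sq_to_K] at hform
  exact (Complex.ofReal_injective ((Complex.ofReal_pow _ _).trans hform)).symm

lemma sub_le_re_inner_prolate1D {𝕎 : Set ℝ} (h𝕎 : 𝕎 ⊆ Icc (-(1 / 2)) (1 / 2))
    (hmeas : MeasurableSet 𝕎) (x : EuclideanSpace ℂ (Fin N)) {B : ℝ} (hB₀ : 0 ≤ B)
    (hB : ∀ f ∈ Icc (-(1 / 2)) (1 / 2) \ 𝕎, ‖dtft x f‖ ^ 2 ≤ B) :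
    ‖x‖ ^ 2 - B ≤ RCLike.re ⟪x, (prolate1D N 𝕎).toEuclideanLin x⟫_ℂ := by
  set band : Set ℝ := Icc (-(1 / 2)) (1 / 2)
  have hvol : volume band = 1 := by rw [Real.volume_Icc]; norm_num
  have hvol_out : volume (band \ 𝕎) ≤ 1 := hvol ▸ measure_mono sdiff_subset
  have hfin_out : volume (band \ 𝕎) < ⊤ := hvol_out.trans_lt ENNReal.one_lt_top
  have hint : IntegrableOn (fun f => ‖dtft x f‖ ^ 2) band :=
    Continuous.integrableOn_Icc (by fun_prop)
  have hout : ∫ f in band \ 𝕎, ‖dtft x f‖ ^ 2 ≤ B :=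
    calc ∫ f in band \ 𝕎, ‖dtft x f‖ ^ 2 ≤ ∫ _ in band \ 𝕎, B :=
          setIntegral_mono_on (hint.mono_set sdiff_subset) (integrableOn_const hfin_out.ne)
            (measurableSet_Icc.diff hmeas) hB
      _ = volume.real (band \ 𝕎) * B := by rw [setIntegral_const, smul_eq_mul]
      _ ≤ B := mul_le_of_le_one_left hB₀ (ENNReal.toReal_le_of_le_ofReal zero_le_one (by simpa))
  rw [inner_prolate1D_eq_setIntegral x (measure_ne_top_of_subset h𝕎 (by simp [hvol])),
    ← parseval_dtft, ← integral_inter_add_sdiff hmeas hint, inter_eq_right.2 h𝕎,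
    RCLike.re_eq_complex_re, Complex.ofReal_re]
  linarith

end ProlateForm

section Interpolation

open Module Polynomial

variable {N : ℕ} {ι : Type*} [Fintype ι]

/-- The vector of the first `N` coefficients of a polynomial, as a signal of length `N`. -/
noncomputable def coeffVec (N : ℕ) : ℂ[X] →ₗ[ℂ] EuclideanSpace ℂ (Fin N) :=
  (WithLp.linearEquiv 2 ℂ (Fin N → ℂ)).symm.toLinearMap ∘ₗ LinearMap.pi fun p => lcoeff ℂ p

/-- The signal of length `N` whose transform is the linear combination, with given coefficients, of
the translates of the kernel `f ↦ K (𝐞 (-f))` to the nodes `θ`. -/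
noncomputable def kernelCombination (N : ℕ) (K : ℂ[X]) (θ : ι → ℝ) :
    (ι → ℂ) →ₗ[ℂ] EuclideanSpace ℂ (Fin N) :=
  coeffVec N ∘ₗ Fintype.linearCombination ℂ fun j => K.comp (C (𝐞 (θ j) : ℂ) * X)

lemma dtft_coeffVec {P : ℂ[X]} (hP : P.natDegree < N) (f : ℝ) :
    dtft (coeffVec N P) f = P.eval (𝐞 (-f) : ℂ) := by
  rw [eval_eq_sum_range' hP, ← Fin.sum_univ_eq_sum_range fun p => P.coeff p * (𝐞 (-f) : ℂ) ^ p]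
  refine Finset.sum_congr rfl fun p _ => ?_
  rw [← Circle.coe_pow, ← AddChar.map_nsmul_eq_pow, nsmul_eq_mul, mul_neg, mul_comm (p : ℝ)]
  rfl

lemma dtft_kernelCombination {K : ℂ[X]} (hK : K.natDegree < N) (θ : ι → ℝ) (c : ι → ℂ) (f : ℝ) :
    dtft (kernelCombination N K θ c) f = ∑ j, c j * K.eval (𝐞 (θ j - f) : ℂ) := by
  have hdeg : (Fintype.linearCombination ℂ (fun j => K.comp (C (𝐞 (θ j) : ℂ) * X)) c).natDegree
      < N := by
    rw [Fintype.linearCombination_apply]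
    refine lt_of_le_of_lt (natDegree_sum_le_of_forall_le _ _ fun j _ => ?_) hK
    refine (natDegree_smul_le _ _).trans (natDegree_comp_le.trans ?_)
    exact mul_le_of_le_one_right' ((natDegree_C_mul_le _ _).trans natDegree_X_le)
  rw [kernelCombination, LinearMap.comp_apply, dtft_coeffVec hdeg, Fintype.linearCombination_apply,
    eval_finsetSum]
  refine Finset.sum_congr rfl fun j _ => ?_
  rw [eval_smul, smul_eq_mul, eval_comp, eval_mul, eval_C, eval_X, ← Circle.coe_mul,
    ← AddChar.map_add_eq_mul, ← sub_eq_add_neg]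

/-- Translates of a kernel that interpolates at the nodes and is small outside `𝕎` span a space
whose signals have nearly all their energy in `𝕎`. -/
theorem card_le_eigenvalueCount_prolate1D [DecidableEq ι] {K : ℂ[X]} (hK : K.natDegree < N)
    {θ : ι → ℝ} (hθ : ∀ i j, K.eval (𝐞 (θ j - θ i) : ℂ) = if j = i then 1 else 0)
    {𝕎 : Set ℝ} (h𝕎 : 𝕎 ⊆ Icc (-(1 / 2)) (1 / 2)) (hmeas : MeasurableSet 𝕎) {r : ℝ}
    (hr : ∀ f ∈ Icc (-(1 / 2)) (1 / 2) \ 𝕎, ∀ j, ‖K.eval (𝐞 (θ j - f) : ℂ)‖ ≤ r) :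
    Fintype.card ι ≤
      eigenvalueCount (prolate1D N 𝕎) (1 - N * Fintype.card ι ^ 2 * r ^ 2) := by
  have hnode : ∀ c i, dtft (kernelCombination N K θ c) (θ i) = c i := fun c i => by
    simp [dtft_kernelCombination hK, hθ]
  have hinj : Function.Injective (kernelCombination N K θ) := fun c d hcd => by
    ext i
    rw [← hnode c, hcd, hnode]
  have hrank : finrank ℂ (kernelCombination N K θ).range = Fintype.card ι := by
    rw [LinearMap.finrank_range_of_inj hinj, finrank_fintype_fun_eq_card]
  refine hrank.ge.trans (finrank_le_eigenvalueCount (isHermitian_prolate1D N 𝕎) _ ?_)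
  rintro _ ⟨c, rfl⟩
  set x := kernelCombination N K θ c
  have hcoeff : ∀ j, ‖c j‖ ≤ √N * ‖x‖ := fun j => hnode c j ▸ norm_dtft_le x (θ j)
  have hout : ∀ f ∈ Icc (-(1 / 2)) (1 / 2) \ 𝕎,
      ‖dtft x f‖ ^ 2 ≤ N * Fintype.card ι ^ 2 * r ^ 2 * ‖x‖ ^ 2 := fun f hf => by
    have hle : ‖dtft x f‖ ≤ Fintype.card ι * (√N * ‖x‖ * r) := by
      rw [dtft_kernelCombination hK]
      refine (norm_sum_le_of_le (f := fun j => c j * K.eval (𝐞 (θ j - f) : ℂ)) _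
        (n := fun _ => √N * ‖x‖ * r) fun j _ => ?_).trans_eq (by simp)
      exact norm_mul_le_of_le (hcoeff j) (hr f hf j)
    calc ‖dtft x f‖ ^ 2 ≤ (Fintype.card ι * (√N * ‖x‖ * r)) ^ 2 := by gcongr
      _ = N * Fintype.card ι ^ 2 * r ^ 2 * ‖x‖ ^ 2 := by
        rw [mul_pow, mul_pow, mul_pow, sq_sqrt N.cast_nonneg]
        ring
  rw [sub_mul, one_mul]
  exact sub_le_re_inner_prolate1D h𝕎 hmeas x (by positivity) hout

end Interpolation

section DampedDirichlet

open Polynomial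

/-- The Dirichlet kernel of length `L`, normalised to be `1` at `z = 1`, times a `k`-th power that
damps it away from `z = 1`. -/
noncomputable def dampedDirichlet (L k : ℕ) : ℂ[X] :=
  C (L : ℂ)⁻¹ * (∑ l ∈ Finset.range L, X ^ l) * (C (1 / 2) * (1 + X)) ^ k

variable {L : ℕ}

lemma eval_dampedDirichlet (L k : ℕ) (z : ℂ) :
    (dampedDirichlet L k).eval z =
      (L : ℂ)⁻¹ * (∑ l ∈ Finset.range L, z ^ l) * ((1 / 2) * (1 + z)) ^ k := by
  simp [dampedDirichlet, eval_finsetSum]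

lemma natDegree_dampedDirichlet_lt (hL : 0 < L) (k : ℕ) :
    (dampedDirichlet L k).natDegree < L + k := by
  have hsum : (∑ l ∈ Finset.range L, (X : ℂ[X]) ^ l).natDegree ≤ L - 1 :=
    natDegree_sum_le_of_forall_le _ _ fun l hl => by
      rw [natDegree_X_pow]
      exact Nat.le_sub_one_of_lt (Finset.mem_range.1 hl)
  have hdamp : (C (1 / 2 : ℂ) * (1 + X)).natDegree ≤ 1 := by compute_degree
  have hprod : (dampedDirichlet L k).natDegree ≤ (0 + (L - 1)) + k * 1 :=
    natDegree_mul_le_of_le (natDegree_mul_le_of_le (natDegree_C _).le hsum)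
      (natDegree_pow_le_of_le k hdamp)
  omega

lemma eval_one_dampedDirichlet (hL : 0 < L) (k : ℕ) : (dampedDirichlet L k).eval 1 = 1 := by
  have hL' : (L : ℂ) ≠ 0 := Nat.cast_ne_zero.2 hL.ne'
  simp [eval_dampedDirichlet, hL', one_add_one_eq_two]

lemma eval_dampedDirichlet_of_pow_eq_one (k : ℕ) {z : ℂ} (hz : z ^ L = 1) (hz₁ : z ≠ 1) :
    (dampedDirichlet L k).eval z = 0 := by
  rw [eval_dampedDirichlet, geom_sum_eq hz₁, hz, sub_self, zero_div, mul_zero, zero_mul]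

lemma norm_half_mul_one_add_fourierChar (φ : ℝ) :
    ‖(1 / 2 : ℂ) * (1 + 𝐞 φ)‖ = |cos (π * φ)| := by
  have hfactor : (1 / 2 : ℂ) * (1 + 𝐞 φ) =
      Complex.exp ((π * φ : ℝ) * Complex.I) * (cos (π * φ) : ℝ) := by
    have hsq : (𝐞 φ : ℂ) =
        Complex.exp ((π * φ : ℝ) * Complex.I) * Complex.exp ((π * φ : ℝ) * Complex.I) := by
      rw [fourierChar_apply, ← Complex.exp_add]
      push_cast
      ring_nf
    have hinv : Complex.exp ((π * φ : ℝ) * Complex.I) * Complex.exp (-(π * φ : ℝ) * Complex.I)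
        = 1 := by
      rw [← Complex.exp_add, neg_mul, add_neg_cancel, Complex.exp_zero]
    rw [hsq, Complex.ofReal_cos, Complex.cos]
    linear_combination -(1 / 2) * hinv
  rw [hfactor, norm_mul, Complex.norm_exp_ofReal_mul_I, one_mul, Complex.norm_real, norm_eq_abs]

lemma norm_eval_dampedDirichlet_le (L k : ℕ) (φ : ℝ) :
    ‖(dampedDirichlet L k).eval (𝐞 φ : ℂ)‖ ≤ |cos (π * φ)| ^ k := by
  have hsum : ‖∑ l ∈ Finset.range L, (𝐞 φ : ℂ) ^ l‖ ≤ L :=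
    (norm_sum_le _ _).trans_eq (by simp only [norm_pow, Circle.norm_coe, one_pow, Finset.sum_const,
      Finset.card_range, nsmul_one])
  have hmean : ‖(L : ℂ)⁻¹ * ∑ l ∈ Finset.range L, (𝐞 φ : ℂ) ^ l‖ ≤ 1 := by
    rw [norm_mul, norm_inv, Complex.norm_natCast, inv_mul_eq_div]
    exact div_le_one_of_le₀ hsum L.cast_nonneg
  rw [eval_dampedDirichlet, norm_mul, norm_pow, norm_half_mul_one_add_fourierChar]
  exact mul_le_of_le_one_left (by positivity) hmean

lemma abs_cos_pi_mul_le {δ φ : ℝ} (hδ : 0 ≤ δ) (h₁ : δ ≤ |φ|) (h₂ : |φ| ≤ 1 - δ) :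
    |cos (π * φ)| ≤ cos (π * δ) := by
  have hπ := pi_pos
  rw [← cos_abs, abs_mul, abs_of_pos hπ, abs_le]
  constructor
  · rw [← cos_pi_sub]
    exact cos_le_cos_of_nonneg_of_le_pi (by nlinarith) (by nlinarith) (by nlinarith)
  · exact cos_le_cos_of_nonneg_of_le_pi (by nlinarith) (by nlinarith) (by nlinarith)

lemma eval_dampedDirichlet_fourierChar_div (hL : 0 < L) (k : ℕ) {m : ℤ} (hm : |m| < L) :
    (dampedDirichlet L k).eval (𝐞 (m / L) : ℂ) = if m = 0 then 1 else 0 := by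
  set ζ : ℂ := Complex.exp (2 * π * Complex.I / L)
  have hζ : IsPrimitiveRoot ζ L := Complex.isPrimitiveRoot_exp L hL.ne'
  have hpow : (𝐞 (m / L) : ℂ) = ζ ^ m := by
    rw [fourierChar_apply, ← Complex.exp_int_mul]
    push_cast
    ring_nf
  rw [hpow]
  split_ifs with h
  · rw [h, zpow_zero, eval_one_dampedDirichlet hL]
  · refine eval_dampedDirichlet_of_pow_eq_one k ?_ fun hone => h ?_
    · rw [← zpow_natCast, zpow_comm, zpow_natCast, hζ.pow_eq_one, _root_.one_zpow]
    · exact Int.eq_zero_of_abs_lt_dvd ((hζ.zpow_eq_one_iff_dvd m).1 hone) hm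

end DampedDirichlet

section Concentration

open Filter

lemma norm_eval_dampedDirichlet_sub_le (L k : ℕ) {W δ θ f : ℝ} (hδ : 0 ≤ δ)
    (hθ : |θ| ≤ W - δ) (hf : f ∈ Icc (-(1 / 2)) (1 / 2) \ Icc (-W) W) :
    ‖(dampedDirichlet L k).eval (𝐞 (θ - f) : ℂ)‖ ≤ cos (π * δ) ^ k := by
  have hf₀ : W < |f| := not_le.1 fun h => hf.2 (abs_le.1 h)
  have hf₁ : |f| ≤ 1 / 2 := abs_le.2 hf.1
  have hlo : |f| - |θ| ≤ |θ - f| := abs_sub_comm θ f ▸ abs_sub_abs_le_abs_sub f θ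
  have hhi : |θ - f| ≤ |θ| + |f| := abs_sub θ f
  exact (norm_eval_dampedDirichlet_le L k _).trans <| pow_le_pow_left₀ (abs_nonneg _)
    (abs_cos_pi_mul_le hδ (by linarith) (by linarith)) k

theorem lt_eigenvalueCount_prolate1D {L k N : ℕ} (hL : 0 < L) (hN : L + k ≤ N) {W δ : ℝ}
    (hδ : 0 < δ) (hδW : δ ≤ W) (hW : W ≤ 1 / 2) :
    2 * (L * (W - δ)) - 1 <
      eigenvalueCount (prolate1D N (Icc (-W) W)) (1 - N ^ 3 * cos (π * δ) ^ (2 * k)) := by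
  have hL₀ : (0 : ℝ) < L := Nat.cast_pos.2 hL
  set J : ℕ := ⌊L * (W - δ)⌋₊
  have hJ : (J : ℝ) ≤ L * (W - δ) := Nat.floor_le (mul_nonneg hL₀.le (sub_nonneg.2 hδW))
  have hJL : 2 * J < L := by
    have : (2 * J : ℝ) < L := by nlinarith
    exact_mod_cast this
  let θ : Finset.Icc (-J : ℤ) J → ℝ := fun j => (j : ℤ) / L
  have hcard : Fintype.card (Finset.Icc (-J : ℤ) J) = 2 * J + 1 := by
    rw [Fintype.card_coe, Int.card_Icc]
    omega
  have hdirac : ∀ i j, (dampedDirichlet L k).eval (𝐞 (θ j - θ i) : ℂ) = if j = i then 1 else 0 := by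
    intro i j
    obtain ⟨hi₁, hi₂⟩ := Finset.mem_Icc.1 i.2
    obtain ⟨hj₁, hj₂⟩ := Finset.mem_Icc.1 j.2
    rw [← sub_div, ← Int.cast_sub,
      eval_dampedDirichlet_fourierChar_div hL k (abs_lt.2 ⟨by omega, by omega⟩)]
    simp only [sub_eq_zero, Subtype.ext_iff]
  have hθ : ∀ j, |θ j| ≤ W - δ := fun j => by
    have hj : |((j : ℤ) : ℝ)| ≤ J := by exact_mod_cast abs_le.2 (Finset.mem_Icc.1 j.2)
    rw [abs_div, abs_of_pos hL₀, div_le_iff₀ hL₀, mul_comm]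
    exact hj.trans hJ
  have hthreshold : 1 - (N : ℝ) ^ 3 * cos (π * δ) ^ (2 * k) ≤
      1 - N * (2 * J + 1 : ℕ) ^ 2 * (cos (π * δ) ^ k) ^ 2 := by
    have hJN : 2 * J + 1 ≤ N := by omega
    rw [pow_succ' (N : ℝ), mul_comm 2 k, pow_mul]
    gcongr
  have hcount := card_le_eigenvalueCount_prolate1D
    ((natDegree_dampedDirichlet_lt hL k).trans_le hN) hdirac
    (Icc_subset_Icc (neg_le_neg hW) hW) measurableSet_Icc
    fun f hf j => norm_eval_dampedDirichlet_sub_le L k hδ.le (hθ j) hf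
  rw [hcard] at hcount
  calc 2 * (L * (W - δ)) - 1 < (2 * J + 1 : ℕ) := by
        push_cast
        linarith [Nat.lt_floor_add_one (L * (W - δ))]
    _ ≤ _ := Nat.cast_le.2 hcount
    _ ≤ _ := Nat.cast_le.2 (eigenvalueCount_antitone _ hthreshold)

lemma exists_eventually_pow_mul_pow_le_exp (m : ℕ) {ρ a : ℝ} (hρ₀ : 0 ≤ ρ) (hρ : ρ < 1)
    (ha : 0 < a) : ∃ c > 0, ∀ᶠ N : ℕ in atTop, ∀ k : ℕ, a * N ≤ k →
      (N : ℝ) ^ m * ρ ^ k ≤ exp (-(c * N)) := by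
  set c := (1 - ρ) * a / 2
  have hc : 0 < c := half_pos (mul_pos (sub_pos.2 hρ) ha)
  have hpow : ∀ᶠ N : ℕ in atTop, ‖(N : ℝ) ^ m‖ ≤ 1 * ‖exp (c * N)‖ :=
    ((isLittleO_pow_exp_pos_mul_atTop m hc).bound one_pos).natCast_atTop
  refine ⟨c, hc, hpow.mono fun N hN k hk => ?_⟩
  rw [one_mul, norm_of_nonneg (by positivity), norm_of_nonneg (exp_pos _).le] at hN
  have hrate : (1 - ρ) * (a * N) ≤ (1 - ρ) * k := mul_le_mul_of_nonneg_left hk (sub_pos.2 hρ).le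
  calc (N : ℝ) ^ m * ρ ^ k ≤ exp (c * N) * exp (ρ - 1) ^ k := by
        gcongr
        linarith [add_one_le_exp (ρ - 1)]
    _ = exp (c * N - (1 - ρ) * k) := by rw [← exp_nat_mul, ← exp_add]; ring_nf
    _ ≤ exp (-(c * N)) := exp_le_exp.2 (by simp only [c]; linarith)

lemma cos_pi_mul_mem_Ico {x : ℝ} (hx₀ : 0 < x) (hx : x ≤ 1 / 2) : cos (π * x) ∈ Ico 0 1 := by
  have hpos : 0 < π * x := mul_pos pi_pos hx₀
  have hle : π * x ≤ π / 2 := by linarith [mul_le_mul_of_nonneg_left hx pi_pos.le]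
  exact ⟨cos_nonneg_of_mem_Icc ⟨by linarith, hle⟩,
    cos_zero ▸ cos_lt_cos_of_nonneg_of_le_pi_div_two le_rfl hle hpos⟩

lemma two_mul_one_sub_le_of_lt_add_one {n W δ l : ℝ} (hn : 0 ≤ n) (hW₀ : 0 ≤ W) (hW : W ≤ 1 / 2)
    (hδ₀ : 0 ≤ δ) (hδ : δ ≤ 1) (hlarge : 2 ≤ W * δ * n) (hl : (1 - δ / 4) * n < l + 1) :
    2 * n * W * (1 - δ) ≤ 2 * (l * (W - δ / 4 * W)) - 1 := by
  have hquad : n * W * (1 - δ / 2) ≤ n * W * (1 - δ / 4) ^ 2 :=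
    mul_le_mul_of_nonneg_left (by linarith [sq_nonneg (δ / 4)]) (mul_nonneg hn hW₀)
  have hfloor : W * (1 - δ / 4) * ((1 - δ / 4) * n) ≤ W * (1 - δ / 4) * (l + 1) :=
    mul_le_mul_of_nonneg_left hl.le (mul_nonneg hW₀ (by linarith))
  have hfactor : W * (1 - δ / 4) ≤ 1 / 2 := (mul_le_of_le_one_right hW₀ (by linarith)).trans hW
  linarith

theorem exists_eventually_lt_eigenvalueCount_prolate1D {W δ : ℝ} (hW : W ∈ Ioc 0 (1 / 2))
    (hδ : δ ∈ Ioo 0 1) : ∃ c > 0, ∀ᶠ N : ℕ in atTop,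
      2 * N * W * (1 - δ) <
        eigenvalueCount (prolate1D N (Icc (-W) W)) (1 - exp (-(c * N))) := by
  obtain ⟨hW₀, hW₁⟩ := hW
  obtain ⟨hδ₀, hδ₁⟩ := hδ
  have hmargin₀ : 0 < δ / 4 * W := by positivity
  have hmargin : δ / 4 * W ≤ W := mul_le_of_le_one_left hW₀.le (by linarith)
  obtain ⟨hcos₀, hcos₁⟩ := cos_pi_mul_mem_Ico hmargin₀ (hmargin.trans hW₁)
  obtain ⟨c, hc, hdecay⟩ :=
    exists_eventually_pow_mul_pow_le_exp 3 hcos₀ hcos₁ (a := δ / 4) (by positivity)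
  have hlarge : ∀ᶠ N : ℕ in atTop, 2 ≤ W * δ * N :=
    (tendsto_natCast_atTop_atTop.const_mul_atTop (mul_pos hW₀ hδ₀)).eventually_ge_atTop 2
  refine ⟨c, hc, (hdecay.and hlarge).mono fun N ⟨hdecayN, hlargeN⟩ => ?_⟩
  have hN : (2 : ℝ) ≤ N := hlargeN.trans <| mul_le_of_le_one_left N.cast_nonneg <|
    mul_le_one₀ (hW₁.trans one_half_lt_one.le) hδ₀.le hδ₁.le
  -- Most of the length goes to the Dirichlet kernel; the rest, `δ N / 4`, pays for the damping.
  set L : ℕ := ⌊(1 - δ / 4) * N⌋₊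
  have hL_le : (L : ℝ) ≤ (1 - δ / 4) * N := Nat.floor_le (by nlinarith)
  have hL : 0 < L := Nat.floor_pos.2 (by nlinarith)
  have hLN : L ≤ N :=
    Nat.cast_le.1 (hL_le.trans (mul_le_of_le_one_left N.cast_nonneg (by linarith)))
  have hk : δ / 4 * N ≤ (2 * (N - L) : ℕ) := by
    push_cast [hLN]
    nlinarith
  calc 2 * N * W * (1 - δ) ≤ 2 * (L * (W - δ / 4 * W)) - 1 :=
        two_mul_one_sub_le_of_lt_add_one N.cast_nonneg hW₀.le hW₁ hδ₀.le hδ₁.le hlargeN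
          (Nat.lt_floor_add_one _)
    _ < _ := lt_eigenvalueCount_prolate1D hL (Nat.add_sub_of_le hLN).le hmargin₀ hmargin hW₁
    _ ≤ _ := Nat.cast_le.2 (eigenvalueCount_antitone _ (sub_le_sub_left (hdecayN _ hk) 1))

lemma one_sub_two_mul_exp_min_le {c₀ c₁ x y : ℝ} (hc₀ : 0 ≤ c₀) (hc₁ : 0 ≤ c₁) (hx : 0 ≤ x)
    (hy : 0 ≤ y) :
    1 - 2 * exp (-min c₀ c₁ * min x y) ≤ (1 - exp (-(c₀ * x))) * (1 - exp (-(c₁ * y))) := by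
  have hexp₀ : exp (-(c₀ * x)) ≤ exp (-min c₀ c₁ * min x y) := by
    rw [exp_le_exp, neg_mul]
    gcongr
    exacts [min_le_left _ _, min_le_left _ _]
  have hexp₁ : exp (-(c₁ * y)) ≤ exp (-min c₀ c₁ * min x y) := by
    rw [exp_le_exp, neg_mul]
    gcongr
    exacts [min_le_right _ _, min_le_right _ _]
  have hprod : 0 ≤ exp (-(c₀ * x)) * exp (-(c₁ * y)) := by positivity
  linarith

theorem exists_eventually_lt_eigenvalueCount_prolate2D {W₀ W₁ ε : ℝ} (hW₀ : W₀ ∈ Ioc 0 (1 / 2))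
    (hW₁ : W₁ ∈ Ioc 0 (1 / 2)) (hε : ε ∈ Ioo 0 1) : ∃ c > 0, ∀ᶠ MN : ℕ × ℕ in atTop,
      4 * MN.1 * MN.2 * W₀ * W₁ * (1 - ε) <
        eigenvalueCount (prolate2D MN.1 MN.2 (Icc (-W₀) W₀ ×ˢ Icc (-W₁) W₁))
          (1 - 2 * exp (-c * min (MN.1 : ℝ) MN.2)) := by
  have hε₂ : ε / 2 ∈ Ioo 0 1 := ⟨half_pos hε.1, (half_lt_self hε.1).trans hε.2⟩
  obtain ⟨c₀, hc₀, h₀⟩ := exists_eventually_lt_eigenvalueCount_prolate1D hW₀ hε₂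
  obtain ⟨c₁, hc₁, h₁⟩ := exists_eventually_lt_eigenvalueCount_prolate1D hW₁ hε₂
  refine ⟨min c₀ c₁, lt_min hc₀ hc₁, ?_⟩
  rw [← prod_atTop_atTop_eq]
  filter_upwards [h₀.prod_mk h₁] with ⟨M, N⟩ ⟨hM, hN⟩
  dsimp only at hM hN ⊢
  rw [prolate2D_prod_eq_kronecker]
  set s := 1 - exp (-(c₀ * M))
  set t := 1 - exp (-(c₁ * N))
  have hs : 0 ≤ s := sub_nonneg.2 (exp_le_one_iff.2 (neg_nonpos.2 (by positivity)))
  have ht : 0 ≤ t := sub_nonneg.2 (exp_le_one_iff.2 (neg_nonpos.2 (by positivity)))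
  have hε' : 0 ≤ 1 - ε / 2 := sub_nonneg.2 hε₂.2.le
  obtain ⟨hW₀', -⟩ := hW₀
  obtain ⟨hW₁', -⟩ := hW₁
  calc 4 * M * N * W₀ * W₁ * (1 - ε)
      ≤ 4 * M * N * W₀ * W₁ * (1 - ε / 2) ^ 2 := by
        gcongr
        linarith [sq_nonneg (ε / 2)]
    _ = 2 * M * W₀ * (1 - ε / 2) * (2 * N * W₁ * (1 - ε / 2)) := by ring
    _ < eigenvalueCount (prolate1D M (Icc (-W₀) W₀)) s *
          eigenvalueCount (prolate1D N (Icc (-W₁) W₁)) t :=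
        mul_lt_mul'' hM hN (by positivity) (by positivity)
    _ ≤ _ := by
        rw [← Nat.cast_mul]
        exact Nat.cast_le.2 ((eigenvalueCount_mul_le_eigenvalueCount_kronecker
          (isHermitian_prolate1D _ _) (isHermitian_prolate1D _ _) hs ht).trans
          (eigenvalueCount_antitone _ (one_sub_two_mul_exp_min_le hc₀.le hc₁.le
            M.cast_nonneg N.cast_nonneg)))

end Concentration

theorem prolate2D_eigenvalue_cluster_near_one
    (W0 W1 : ℝ) (hW0 : W0 ∈ Set.Ioo (0 : ℝ) (1 / 2)) (hW1 : W1 ∈ Set.Ioo (0 : ℝ) (1 / 2))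
    (ε : ℝ) (hε : ε ∈ Set.Ioo (0 : ℝ) 1) :
    ∃ (Cbar₁ Cbar₂ : ℝ) (Mbar₁ Nbar₁ : ℕ), 0 < Cbar₁ ∧ 0 < Cbar₂ ∧ 1 ≤ Mbar₁ ∧ 1 ≤ Nbar₁ ∧
      ∀ (M N : ℕ), Mbar₁ ≤ M → Nbar₁ ≤ N →
        ∀ (hA : (prolate2D M N (Set.Icc (-W0) W0 ×ˢ Set.Icc (-W1) W1)).IsHermitian)
          (μ : Fin (M * N) → ℝ),
          Antitone μ →
          (∃ e : (Fin M × Fin N) ≃ Fin (M * N), hA.eigenvalues = μ ∘ e) →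
          ∀ p : Fin (M * N), (p : ℕ) ≤ ⌊4 * (M : ℝ) * (N : ℝ) * W0 * W1 * (1 - ε)⌋₊ →
            1 - μ p ≤ Cbar₁ * Real.exp (-Cbar₂ * min (M : ℝ) (N : ℝ)) := by
  obtain ⟨c, hc, hcount⟩ := exists_eventually_lt_eigenvalueCount_prolate2D
    (Ioo_subset_Ioc_self hW0) (Ioo_subset_Ioc_self hW1) hε
  obtain ⟨⟨M₀, N₀⟩, hcount⟩ := Filter.eventually_atTop.1 hcount
  refine ⟨2, c, max M₀ 1, max N₀ 1, two_pos, hc, le_max_right _ _, le_max_right _ _,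
    fun M N hM hN hA μ hμ ⟨e, he⟩ p hp => ?_⟩
  have hcountMN := hcount (M, N) ⟨(le_max_left _ _).trans hM, (le_max_left _ _).trans hN⟩
  have hε' : 0 ≤ 1 - ε := sub_nonneg.2 hε.2.le
  have hfloor : ((p : ℕ) : ℝ) ≤ 4 * M * N * W0 * W1 * (1 - ε) :=
    (Nat.le_floor_iff (by have := hW0.1; have := hW1.1; positivity)).1 hp
  have hpcount := Nat.cast_lt.1 (hfloor.trans_lt hcountMN)
  linarith [le_apply_of_lt_eigenvalueCount hA hμ he hpcount]
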